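/- arXiv:2006.09969 — 2 statements merged into one kernel-verified Lean document; each statement's English description precedes it below -/
import Mathlib

section
/- Let α ∈ (0,1) with αℓ ∈ ℕ and αℓ ≥ 1, and let ℓ ≥ 1 and n ≥ 2ℓ be integers. Given F : V(J_{n,ℓ,α}) → [0,1], define G : [n]^ℓ → [0,1] by G(x₁,…,x_ℓ) = F({x₁,…,x_ℓ}) if the coordinates x₁,…,x_ℓ are pairwise distinct, and G(x) = 0 otherwise. Then ⟨G, L_C G⟩_{π_C} ≤ ⟨F, L_J F⟩_π + ((2ℓ² + ℓ)/(2n))·E_π[F], where π_C is uniform on [n]^ℓ, ⟨G, L_C G⟩_{π_C} = E_{x∼π_C}[G(x)²] − E_{x∼π_C}[G(x)·(A_C G)(x)] with A_C the Johnson-approximating graph operator, π is uniform on the vertices of J_{n,ℓ,α}, and ⟨F, L_J F⟩_π = (1/2)·E_{(U,V)∼E(J)}[(F(U) − F(V))²] over a uniformly random ordered edge of J_{n,ℓ,α}. -/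
open Finset

/-- The Johnson-approximating graph operator on `(ℤ/nℤ)^ℓ` with noise weight `k = αℓ`. -/
noncomputable def ugACop (n ℓ k : ℕ) [NeZero n] (f : (Fin ℓ → ZMod n) → ℝ)
    (x : Fin ℓ → ZMod n) : ℝ :=
  (∑ B ∈ univ.filter (fun B : Finset (Fin ℓ) => B.card = k),
      ∑ y : Fin ℓ → ZMod n, f (fun j => x j + if j ∈ B then y j else 0))
    / ((Nat.choose ℓ k : ℝ) * (n : ℝ) ^ ℓ)

/-- The (ordered) edge set of the Johnson graph `J_{n,ℓ,α}` (ground set `ℤ/nℤ`), `k = αℓ`. -/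
def ugJEdges (n ℓ k : ℕ) [NeZero n] : Finset (Finset (ZMod n) × Finset (ZMod n)) :=
  univ.filter (fun p => p.1.card = ℓ ∧ p.2.card = ℓ ∧ (p.1 ∩ p.2).card = ℓ - k)

/-- The Johnson Laplacian quadratic form `⟨F, L_J F⟩_π = (1/2)·E_{(U,V)}[(F U − F V)²]`. -/
noncomputable def ugJLap (n ℓ k : ℕ) [NeZero n] (F : Finset (ZMod n) → ℝ) : ℝ :=
  (1 / 2) * ((∑ p ∈ ugJEdges n ℓ k, (F p.1 - F p.2) ^ 2) / ((ugJEdges n ℓ k).card : ℝ))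

/-- The average `E_π[F]` of `F` over the ℓ-element subsets of the ground set. -/
noncomputable def ugJAvg (n ℓ : ℕ) [NeZero n] (F : Finset (ZMod n) → ℝ) : ℝ :=
  (∑ S ∈ univ.filter (fun S : Finset (ZMod n) => S.card = ℓ), F S) / (Nat.choose n ℓ : ℝ)

/-
Averaging over the symmetric group replaces each product `F U * F V` by a correlation that depends
only on `#(U ∩ V)`; write `b` for its value on edges of the Johnson graph and `μ = E[F]`.
Resampling `k` coordinates of an injective tuple `x` turns its image `U` into the image `V` of
another tuple. Unless a resampled coordinate collides with another coordinate of the new tuple, or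
with a coordinate of `x`, the pair `(U, V)` is an edge of the Johnson graph and has correlation `b`.
Each of the two exceptional events has probability at most `kℓ/n`.

A collision inside the new tuple loses at most `b`. In the other case `U` and `V` share too many
points, but they still have a common neighbour `W`, and `u v ≥ u w + w v - w` on `[0, 1]` shows that
the correlation is at least `2b - μ`, a loss of at most `μ - b`. The total loss is therefore at most
`(kℓ/n) (b + (μ - b)) = (kℓ/n) μ`. A common neighbour may fail to exist when `n` is small, but then
`kℓ/n ≥ 1` and the claim is trivial.
-/

open scoped BigOperators Pointwise

section GroupAverage

variable {G α M : Type*} [Group G] [Fintype G] [MulAction G α] [AddCommMonoid M] [Module ℚ≥0 M]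

lemma expect_expect_smul {s : Finset α} (hs : ∀ g : G, ∀ a ∈ s, g • a ∈ s) (f : α → M) :
    𝔼 a ∈ s, 𝔼 g : G, f (g • a) = 𝔼 a ∈ s, f a := by
  have translate (g : G) : 𝔼 a ∈ s, f (g • a) = 𝔼 a ∈ s, f a :=
    expect_nbij' (g • ·) (g⁻¹ • ·) (hs g) (hs g⁻¹) (fun a _ => inv_smul_smul g a)
      (fun a _ => smul_inv_smul g a) fun _ _ => rfl
  rw [expect_comm]
  simp only [translate, Fintype.expect_const]

lemma expect_smul_eq_expect {s : Finset α} {a : α} (hs : ∀ g : G, ∀ b ∈ s, g • b ∈ s)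
    (hne : s.Nonempty) (ha : ∀ b ∈ s, ∃ g : G, g • a = b) (f : α → M) :
    𝔼 g : G, f (g • a) = 𝔼 b ∈ s, f b := by
  have orbit_average : ∀ b ∈ s, 𝔼 g : G, f (g • b) = 𝔼 g : G, f (g • a) := by
    intro b hb
    obtain ⟨h, rfl⟩ := ha b hb
    exact Fintype.expect_equiv (Equiv.mulRight h) _ _ fun g => by simp [mul_smul]
  rw [← expect_expect_smul hs f, expect_congr rfl orbit_average, expect_const hne]

/-- The correlation of `f` at the points `a` and `b`, averaged over a common random translation by
an element of `G`. -/
noncomputable def orbitCorr (G : Type*) [Group G] [Fintype G] [MulAction G α] (f : α → ℝ)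
    (a b : α) : ℝ :=
  𝔼 g : G, f (g • a) * f (g • b)

end GroupAverage

section Slice

lemma exists_perm_apply_eq {X κ : Type*} [Fintype X] [DecidableEq κ] {f g : X → κ}
    (h : ∀ c, #{x | f x = c} = #{x | g x = c}) : ∃ τ : Equiv.Perm X, ∀ x, g (τ x) = f x := by
  have fiberEquiv (c : κ) : Nonempty ({x // f x = c} ≃ {x // g x = c}) :=
    Fintype.card_eq.mp (by simpa only [Fintype.card_subtype] using h c)
  exact ⟨Equiv.ofFiberEquiv fun c => (fiberEquiv c).some, Equiv.ofFiberEquiv_map _⟩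

variable {X : Type*} [DecidableEq X]

lemma exists_perm_smul_eq_and_smul_eq [Finite X] {U V U' V' : Finset X} (hU : #U = #U')
    (hV : #V = #V') (hUV : #(U ∩ V) = #(U' ∩ V')) :
    ∃ τ : Equiv.Perm X, τ • U = U' ∧ τ • V = V' := by
  have := Fintype.ofFinite X
  let cell (P Q : Finset X) (x : X) : Bool × Bool := (decide (x ∈ P), decide (x ∈ Q))
  have filter_cell (P Q : Finset X) (c d : Bool) : ({x | cell P Q x = (c, d)} : Finset X) =
      if c then (if d then P ∩ Q else P \ Q) else (if d then Q \ P else (P ∪ Q)ᶜ) := by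
    ext x
    cases c <;> cases d <;> simp [cell, and_comm]
  obtain ⟨τ, hτ⟩ : ∃ τ : Equiv.Perm X, ∀ x, cell U' V' (τ x) = cell U V x := by
    refine exists_perm_apply_eq fun ⟨c, d⟩ => ?_
    have := card_sdiff_add_card_inter U V
    have := card_sdiff_add_card_inter U' V'
    have := card_sdiff_add_card_inter V U
    have := card_sdiff_add_card_inter V' U'
    have := card_compl_add_card (U ∪ V)
    have := card_compl_add_card (U' ∪ V')
    have := card_union_add_card_inter U V
    have := card_union_add_card_inter U' V'
    rw [filter_cell, filter_cell]
    rw [inter_comm V, inter_comm V'] at *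
    cases c <;> cases d <;> simp only [if_true, if_false, Bool.false_eq_true] <;> omega
  simp only [cell, Prod.mk.injEq, decide_eq_decide] at hτ
  refine ⟨τ, ?_, ?_⟩ <;> ext y <;> rw [← inv_smul_mem_iff, Equiv.Perm.smul_def]
  · simpa using (hτ (τ⁻¹ y)).1.symm
  · simpa using (hτ (τ⁻¹ y)).2.symm

lemma exists_perm_smul_eq [Finite X] {U V : Finset X} (h : #U = #V) :
    ∃ τ : Equiv.Perm X, τ • U = V := by
  obtain ⟨τ, hτ, -⟩ := exists_perm_smul_eq_and_smul_eq h h (by simpa only [inter_self] using h)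
  exact ⟨τ, hτ⟩

/-- The average of `F` over the `ℓ`-element subsets of `X`. -/
noncomputable def sliceAvg {X : Type*} [Fintype X] (ℓ : ℕ) (F : Finset X → ℝ) : ℝ :=
  𝔼 S ∈ powersetCard ℓ univ, F S

lemma sliceAvg_nonneg {X : Type*} [Fintype X] {ℓ : ℕ} {F : Finset X → ℝ}
    (hF : ∀ S, #S = ℓ → F S ∈ Set.Icc 0 1) : 0 ≤ sliceAvg ℓ F :=
  expect_nonneg fun S hS => (hF S (mem_powersetCard_univ.mp hS)).1

lemma smul_mem_Icc {ℓ : ℕ} {F : Finset X → ℝ} {U : Finset X}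
    (hF : ∀ S, #S = ℓ → F S ∈ Set.Icc 0 1) (hU : #U = ℓ)
    (σ : Equiv.Perm X) : F (σ • U) ∈ Set.Icc 0 1 :=
  hF _ ((card_smul_finset σ U).trans hU)

variable [Fintype X]

lemma expect_perm_smul_eq_sliceAvg {ℓ : ℕ} {U : Finset X} (hU : #U = ℓ) (F : Finset X → ℝ) :
    𝔼 σ : Equiv.Perm X, F (σ • U) = sliceAvg ℓ F := by
  refine expect_smul_eq_expect (fun σ S hS => ?_) ⟨U, by simp [hU]⟩ (fun S hS => ?_) F
  · simpa only [mem_powersetCard_univ, card_smul_finset] using hS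
  · exact exists_perm_smul_eq (hU.trans (mem_powersetCard_univ.mp hS).symm)

lemma orbitCorr_self_eq_sliceAvg {ℓ : ℕ} {U : Finset X} (hU : #U = ℓ) (F : Finset X → ℝ) :
    orbitCorr (Equiv.Perm X) F U U = sliceAvg ℓ (F ^ 2) := by
  rw [← expect_perm_smul_eq_sliceAvg hU]
  simp only [orbitCorr, Pi.pow_apply, sq]

section UnitInterval

variable {ℓ : ℕ} {F : Finset X → ℝ} {U V W : Finset X}

lemma orbitCorr_nonneg (hF : ∀ S, #S = ℓ → F S ∈ Set.Icc 0 1) (hU : #U = ℓ) (hV : #V = ℓ) :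
    0 ≤ orbitCorr (Equiv.Perm X) F U V :=
  expect_nonneg fun σ _ => mul_nonneg (smul_mem_Icc hF hU σ).1 (smul_mem_Icc hF hV σ).1

lemma orbitCorr_le_sliceAvg (hF : ∀ S, #S = ℓ → F S ∈ Set.Icc 0 1) (hU : #U = ℓ) (hV : #V = ℓ) :
    orbitCorr (Equiv.Perm X) F U V ≤ sliceAvg ℓ F := by
  rw [← expect_perm_smul_eq_sliceAvg hU]
  exact expect_le_expect fun σ _ =>
    mul_le_of_le_one_right (smul_mem_Icc hF hU σ).1 (smul_mem_Icc hF hV σ).2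

lemma mul_add_mul_sub_le_mul {u v w : ℝ} (hu : u ∈ Set.Icc 0 1) (hv : v ∈ Set.Icc 0 1)
    (hw : w ∈ Set.Icc 0 1) : u * w + w * v - w ≤ u * v := by
  -- The difference is `(1 - w) u v + w (1 - u) (1 - v)`.
  have := mul_nonneg (sub_nonneg.mpr hw.2) (mul_nonneg hu.1 hv.1)
  have := mul_nonneg hw.1 (mul_nonneg (sub_nonneg.mpr hu.2) (sub_nonneg.mpr hv.2))
  linarith

lemma orbitCorr_add_orbitCorr_sub_le (hF : ∀ S, #S = ℓ → F S ∈ Set.Icc 0 1) (hU : #U = ℓ)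
    (hV : #V = ℓ) (hW : #W = ℓ) :
    orbitCorr (Equiv.Perm X) F U W + orbitCorr (Equiv.Perm X) F W V - sliceAvg ℓ F ≤
      orbitCorr (Equiv.Perm X) F U V := by
  rw [← expect_perm_smul_eq_sliceAvg hW]
  simp only [orbitCorr, ← expect_add_distrib, ← expect_sub_distrib]
  exact expect_le_expect fun σ _ => mul_add_mul_sub_le_mul (smul_mem_Icc hF hU σ)
    (smul_mem_Icc hF hV σ) (smul_mem_Icc hF hW σ)

end UnitInterval

end Slice

section JohnsonGraph

/-- The ordered edges of the Johnson graph on the `ℓ`-element subsets of `X` in which neighbours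
differ in `k` points. -/
def johnsonEdges (X : Type*) [Fintype X] [DecidableEq X] (ℓ k : ℕ) :
    Finset (Finset X × Finset X) :=
  {p | #p.1 = ℓ ∧ #p.2 = ℓ ∧ #(p.1 ∩ p.2) = ℓ - k}

variable {X : Type*} [Fintype X] [DecidableEq X] {ℓ k : ℕ} {F : Finset X → ℝ} {U V : Finset X}

/-- The average of `F U * F V` over the ordered edges `(U, V)` of the Johnson graph. -/
noncomputable def johnsonCorr (ℓ k : ℕ) (F : Finset X → ℝ) : ℝ :=
  𝔼 p ∈ johnsonEdges X ℓ k, F p.1 * F p.2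

/-- The quadratic form of the Laplacian of the Johnson graph. -/
noncomputable def johnsonLaplacian (ℓ k : ℕ) (F : Finset X → ℝ) : ℝ :=
  (1 / 2) * 𝔼 p ∈ johnsonEdges X ℓ k, (F p.1 - F p.2) ^ 2

lemma mem_johnsonEdges :
    (U, V) ∈ johnsonEdges X ℓ k ↔ #U = ℓ ∧ #V = ℓ ∧ #(U ∩ V) = ℓ - k := by
  simp [johnsonEdges]

lemma expect_perm_smul_eq_expect_johnsonEdges (h : (U, V) ∈ johnsonEdges X ℓ k)
    (f : Finset X × Finset X → ℝ) :
    𝔼 σ : Equiv.Perm X, f (σ • U, σ • V) = 𝔼 p ∈ johnsonEdges X ℓ k, f p := by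
  refine expect_smul_eq_expect (a := (U, V)) ?invariant ⟨_, h⟩ ?transitive f
  case invariant =>
    rintro σ ⟨P, Q⟩ hPQ
    simpa only [Prod.smul_mk, mem_johnsonEdges, ← smul_finset_inter, card_smul_finset] using hPQ
  case transitive =>
    rintro ⟨P, Q⟩ hPQ
    obtain ⟨hU, hV, hUV⟩ := mem_johnsonEdges.mp h
    obtain ⟨hP, hQ, hPQ⟩ := mem_johnsonEdges.mp hPQ
    obtain ⟨τ, rfl, rfl⟩ := exists_perm_smul_eq_and_smul_eq (hU.trans hP.symm) (hV.trans hQ.symm)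
      (hUV.trans hPQ.symm)
    exact ⟨τ, rfl⟩

lemma orbitCorr_eq_johnsonCorr (h : (U, V) ∈ johnsonEdges X ℓ k) (F : Finset X → ℝ) :
    orbitCorr (Equiv.Perm X) F U V = johnsonCorr ℓ k F :=
  expect_perm_smul_eq_expect_johnsonEdges h fun p => F p.1 * F p.2

lemma exists_johnsonEdges_of_le_card_inter (hU : #U = ℓ) (hV : #V = ℓ) (hk : k ≤ ℓ)
    (hUV : ℓ - k ≤ #(U ∩ V)) (hX : #(U ∪ V) + k ≤ Fintype.card X) :
    ∃ W, (U, W) ∈ johnsonEdges X ℓ k ∧ (W, V) ∈ johnsonEdges X ℓ k := by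
  obtain ⟨T, hT, hTcard⟩ := exists_subset_card_eq hUV
  obtain ⟨R, hR, hRcard⟩ : ∃ R ⊆ (U ∪ V)ᶜ, #R = k :=
    exists_subset_card_eq (by rw [card_compl]; omega)
  obtain ⟨hTU, hTV⟩ := subset_inter_iff.mp hT
  have hRUV : Disjoint (U ∪ V) R := disjoint_compl_right.mono_right hR
  have hRU : Disjoint U R := hRUV.mono_left subset_union_left
  have hRV : Disjoint V R := hRUV.mono_left subset_union_right
  have inter_eq {S : Finset X} (hTS : T ⊆ S) (hRS : Disjoint S R) : S ∩ (T ∪ R) = T := by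
    rw [inter_union_distrib_left, disjoint_iff_inter_eq_empty.mp hRS, union_empty,
      inter_eq_right.mpr hTS]
  have hW : #(T ∪ R) = ℓ := by
    rw [card_union_of_disjoint (hRU.mono_left hTU)]
    omega
  refine ⟨T ∪ R, mem_johnsonEdges.mpr ⟨hU, hW, ?_⟩, mem_johnsonEdges.mpr ⟨hW, hV, ?_⟩⟩
  · rw [inter_eq hTU hRU, hTcard]
  · rw [inter_comm, inter_eq hTV hRV, hTcard]

lemma johnsonEdges_nonempty (hk : k ≤ ℓ) (hX : ℓ + k ≤ Fintype.card X) :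
    (johnsonEdges X ℓ k).Nonempty := by
  obtain ⟨U, -, hU⟩ : ∃ U ⊆ (univ : Finset X), #U = ℓ :=
    exists_subset_card_eq (by rw [card_univ]; omega)
  obtain ⟨W, hUW, -⟩ := exists_johnsonEdges_of_le_card_inter hU hU hk
    (by rw [inter_self]; omega) (by rwa [union_self, hU])
  exact ⟨_, hUW⟩

lemma johnsonLaplacian_eq (hE : (johnsonEdges X ℓ k).Nonempty) (F : Finset X → ℝ) :
    johnsonLaplacian ℓ k F = sliceAvg ℓ (F ^ 2) - johnsonCorr ℓ k F := by
  obtain ⟨⟨U, V⟩, h⟩ := hE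
  have expand : 𝔼 σ : Equiv.Perm X, (F (σ • U) - F (σ • V)) ^ 2 =
      orbitCorr (Equiv.Perm X) F U U + orbitCorr (Equiv.Perm X) F V V -
        2 * orbitCorr (Equiv.Perm X) F U V := by
    simp only [orbitCorr, mul_expect, ← expect_add_distrib, ← expect_sub_distrib]
    exact expect_congr rfl fun σ _ => by ring
  obtain ⟨hU, hV, -⟩ := mem_johnsonEdges.mp h
  rw [orbitCorr_self_eq_sliceAvg hU, orbitCorr_self_eq_sliceAvg hV,
    orbitCorr_eq_johnsonCorr h] at expand
  rw [johnsonLaplacian, ← expect_perm_smul_eq_expect_johnsonEdges h fun p => (F p.1 - F p.2) ^ 2,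
    expand]
  ring

lemma johnsonLaplacian_nonneg (ℓ k : ℕ) (F : Finset X → ℝ) : 0 ≤ johnsonLaplacian ℓ k F :=
  mul_nonneg (by norm_num) (expect_nonneg fun _ _ => sq_nonneg _)

lemma johnsonCorr_nonneg (hF : ∀ S, #S = ℓ → F S ∈ Set.Icc 0 1) : 0 ≤ johnsonCorr ℓ k F := by
  refine expect_nonneg fun ⟨U, V⟩ h => ?_
  obtain ⟨hU, hV, -⟩ := mem_johnsonEdges.mp h
  exact mul_nonneg (hF U hU).1 (hF V hV).1

lemma johnsonCorr_le_sliceAvg (hE : (johnsonEdges X ℓ k).Nonempty)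
    (hF : ∀ S, #S = ℓ → F S ∈ Set.Icc 0 1) : johnsonCorr ℓ k F ≤ sliceAvg ℓ F := by
  obtain ⟨⟨U, V⟩, h⟩ := hE
  obtain ⟨hU, hV, -⟩ := mem_johnsonEdges.mp h
  rw [← orbitCorr_eq_johnsonCorr h]
  exact orbitCorr_le_sliceAvg hF hU hV

lemma two_mul_johnsonCorr_sub_le_orbitCorr (hF : ∀ S, #S = ℓ → F S ∈ Set.Icc 0 1) (hU : #U = ℓ)
    (hV : #V = ℓ) (hk : k ≤ ℓ) (hUV : ℓ - k ≤ #(U ∩ V)) (hX : #(U ∪ V) + k ≤ Fintype.card X) :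
    2 * johnsonCorr ℓ k F - sliceAvg ℓ F ≤ orbitCorr (Equiv.Perm X) F U V := by
  obtain ⟨W, hUW, hWV⟩ := exists_johnsonEdges_of_le_card_inter hU hV hk hUV hX
  have triangle := orbitCorr_add_orbitCorr_sub_le hF hU hV (mem_johnsonEdges.mp hUW).2.1
  rw [orbitCorr_eq_johnsonCorr hUW, orbitCorr_eq_johnsonCorr hWV] at triangle
  linarith

end JohnsonGraph

section Piecewise

variable {ι X : Type*} [Fintype ι] [DecidableEq ι]

lemma exists_apply_eq_piecewise_of_not_injective {B : Finset ι} {x y : ι → X}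
    (hx : Function.Injective x) (h : ¬ Function.Injective (B.piecewise y x)) :
    ∃ p ∈ (B ×ˢ univ).filter (fun p => p.1 ≠ p.2), y p.1 = B.piecewise y x p.2 := by
  obtain ⟨i, j, hij, hne⟩ := Function.not_injective_iff.mp h
  by_cases hi : i ∈ B
  · exact ⟨(i, j), by simp [hi, hne], by rw [← hij, piecewise_eq_of_mem _ _ _ hi]⟩
  by_cases hj : j ∈ B
  · exact ⟨(j, i), by simp [hj, Ne.symm hne], by rw [hij, piecewise_eq_of_mem _ _ _ hj]⟩
  rw [piecewise_eq_of_notMem _ _ _ hi, piecewise_eq_of_notMem _ _ _ hj] at hij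
  exact absurd (hx hij) hne

variable [DecidableEq X]

lemma card_sub_le_card_image_inter_image_piecewise (B : Finset ι) {x : ι → X} (y : ι → X)
    (hx : Function.Injective x) :
    Fintype.card ι - #B ≤ #(univ.image x ∩ univ.image (B.piecewise y x)) := by
  rw [← card_compl, ← card_image_of_injective _ hx]
  refine card_le_card (subset_inter (image_subset_image (subset_univ _)) ?_)
  intro z hz
  obtain ⟨j, hj, rfl⟩ := mem_image.mp hz
  exact mem_image.mpr ⟨j, mem_univ j, piecewise_eq_of_notMem _ _ _ (mem_compl.mp hj)⟩

lemma not_disjoint_image_of_card_sub_lt {B : Finset ι} {x y : ι → X}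
    (h : Fintype.card ι - #B < #(univ.image x ∩ univ.image (B.piecewise y x))) :
    ¬ Disjoint (B.image y) (univ.image x) := by
  intro hdisj
  have hsub : univ.image x ∩ univ.image (B.piecewise y x) ⊆ Bᶜ.image x := by
    intro z hz
    obtain ⟨hzx, hzy⟩ := mem_inter.mp hz
    obtain ⟨j, -, rfl⟩ := mem_image.mp hzy
    by_cases hjB : j ∈ B
    · rw [piecewise_eq_of_mem _ _ _ hjB] at hzx
      exact absurd hzx (disjoint_left.mp hdisj (mem_image_of_mem y hjB))
    · rw [piecewise_eq_of_notMem _ _ _ hjB]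
      exact mem_image_of_mem x (mem_compl.mpr hjB)
  have := (card_le_card hsub).trans card_image_le
  rw [card_compl] at this
  omega

end Piecewise

section Resampling

lemma expect_expect_update {ι X M : Type*} [Fintype ι] [DecidableEq ι] [Fintype X]
    [AddCommMonoid M] [Module ℚ≥0 M] (i : ι) (f : (ι → X) → M) :
    𝔼 y : ι → X, 𝔼 c : X, f (Function.update y i c) = 𝔼 y, f y := by
  let swap (p : (ι → X) × X) : (ι → X) × X := (Function.update p.1 i p.2, p.1 i)
  have swap_involutive : Function.Involutive swap := fun p => by simp [swap]
  calc 𝔼 y : ι → X, 𝔼 c : X, f (Function.update y i c)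
      = 𝔼 p : (ι → X) × X, f (swap p).1 := by rw [← univ_product_univ, expect_product]
    _ = 𝔼 p : (ι → X) × X, f p.1 :=
        Fintype.expect_equiv swap_involutive.toPerm _ _ fun _ => rfl
    _ = 𝔼 y : ι → X, 𝔼 _c : X, f y := by rw [← univ_product_univ, expect_product]
    _ = 𝔼 y : ι → X, f y := expect_congr rfl fun y _ =>
        have : Nonempty X := ⟨y i⟩
        Fintype.expect_const _

variable {ι X : Type*} [Fintype ι] [DecidableEq ι] [Fintype X]

lemma expect_boole_apply_eq [DecidableEq X] (i : ι) {g : (ι → X) → X}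
    (hg : ∀ y c, g (Function.update y i c) = g y) :
    𝔼 y : ι → X, (if y i = g y then 1 else 0 : ℝ) = (Fintype.card X : ℝ)⁻¹ := by
  cases isEmpty_or_nonempty X with
  | inl _ =>
    have : IsEmpty (ι → X) := ⟨fun y => isEmptyElim (y i)⟩
    simp
  | inr _ =>
    rw [← expect_expect_update i]
    simp [hg]

lemma expect_boole_le_of_exists_apply_eq {κ : Type*} {P : (ι → X) → Prop} [DecidablePred P]
    {s : Finset (ι × κ)} {g : κ → (ι → X) → X}
    (hg : ∀ p ∈ s, ∀ y c, g p.2 (Function.update y p.1 c) = g p.2 y)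
    (hP : ∀ y, P y → ∃ p ∈ s, y p.1 = g p.2 y) :
    𝔼 y : ι → X, (if P y then 1 else 0 : ℝ) ≤ #s / Fintype.card X := by
  classical
  have union_bound (y : ι → X) :
      (if P y then 1 else 0 : ℝ) ≤ ∑ p ∈ s, if y p.1 = g p.2 y then 1 else 0 := by
    split_ifs with h
    · obtain ⟨p, hp, hy⟩ := hP y h
      refine le_trans (by rw [if_pos hy]) (single_le_sum (fun q _ => ?_) hp)
      positivity
    · positivity
  calc 𝔼 y : ι → X, (if P y then 1 else 0 : ℝ)
      ≤ 𝔼 y : ι → X, ∑ p ∈ s, if y p.1 = g p.2 y then 1 else 0 :=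
        expect_le_expect fun y _ => union_bound y
    _ = ∑ _p ∈ s, (Fintype.card X : ℝ)⁻¹ := by
        rw [expect_sum_comm]
        exact sum_congr rfl fun p hp => expect_boole_apply_eq p.1 (hg p hp)
    _ = #s / Fintype.card X := by rw [sum_const, nsmul_eq_mul, div_eq_mul_inv]

variable [DecidableEq X]

lemma expect_boole_not_disjoint_image_le (B : Finset ι) (x : ι → X) :
    𝔼 y : ι → X, (if ¬ Disjoint (B.image y) (univ.image x) then 1 else 0 : ℝ) ≤
      #B * Fintype.card ι / Fintype.card X := by
  rw [← card_univ, ← Nat.cast_mul, ← card_product]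
  refine expect_boole_le_of_exists_apply_eq (g := fun i _ => x i) (fun _ _ _ _ => rfl) ?_
  intro y hy
  obtain ⟨z, hzy, hzx⟩ := not_disjoint_iff.mp hy
  obtain ⟨j, hj, rfl⟩ := mem_image.mp hzy
  obtain ⟨i, hi, hij⟩ := mem_image.mp hzx
  exact ⟨(j, i), mem_product.mpr ⟨hj, hi⟩, hij.symm⟩

lemma expect_boole_not_injective_piecewise_le (B : Finset ι) {x : ι → X}
    (hx : Function.Injective x) :
    𝔼 y : ι → X, (if ¬ Function.Injective (B.piecewise y x) then 1 else 0 : ℝ) ≤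
      #B * Fintype.card ι / Fintype.card X := by
  let s : Finset (ι × ι) := {p ∈ B ×ˢ univ | p.1 ≠ p.2}
  have hs : (#s : ℝ) ≤ #B * Fintype.card ι := by
    exact_mod_cast (card_filter_le _ _).trans_eq (card_product B univ)
  have resample_invariant : ∀ p ∈ s, ∀ y c,
      B.piecewise (Function.update y p.1 c) x p.2 = B.piecewise y x p.2 := by
    intro p hp y c
    have hne : p.2 ≠ p.1 := (mem_filter.mp hp).2.symm
    simp only [piecewise, Function.update_of_ne hne]
  calc 𝔼 y : ι → X, (if ¬ Function.Injective (B.piecewise y x) then 1 else 0 : ℝ)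
      ≤ #s / Fintype.card X :=
        expect_boole_le_of_exists_apply_eq (g := fun j y => B.piecewise y x j)
          resample_invariant fun y => exists_apply_eq_piecewise_of_not_injective hx
    _ ≤ #B * Fintype.card ι / Fintype.card X := by gcongr

end Resampling

section Lift

variable {ι X : Type*} [Fintype ι] [DecidableEq X] {F : Finset X → ℝ}

/-- The lift to tuples of a function `F` of sets, equal to `0` on tuples with repeated entries. -/
def injLift (F : Finset X → ℝ) (x : ι → X) : ℝ :=
  if Function.Injective x then F (univ.image x) else 0

lemma injLift_smul (σ : Equiv.Perm X) (x : ι → X) :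
    injLift F (σ • x) = if Function.Injective x then F (σ • univ.image x) else 0 := by
  have hinj : Function.Injective (σ • x) ↔ Function.Injective x := σ.injective.of_comp_iff x
  have himage : univ.image (σ • x) = σ • univ.image x := by
    ext; simp [mem_smul_finset]
  simp only [injLift, hinj, himage]

variable {ℓ k : ℕ} {x y : ι → X}

lemma card_image_univ_eq (hι : Fintype.card ι = ℓ) (hx : Function.Injective x) :
    #(univ.image x) = ℓ := by
  rw [card_image_of_injective _ hx, card_univ, hι]

variable [Fintype X]

lemma orbitCorr_injLift (hx : Function.Injective x) (hy : Function.Injective y) :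
    orbitCorr (Equiv.Perm X) (injLift F) x y =
      orbitCorr (Equiv.Perm X) F (univ.image x) (univ.image y) := by
  simp only [orbitCorr, injLift_smul, if_pos hx, if_pos hy]

lemma orbitCorr_injLift_of_not_injective_left (hx : ¬ Function.Injective x) (y : ι → X) :
    orbitCorr (Equiv.Perm X) (injLift F) x y = 0 := by
  simp only [orbitCorr, injLift_smul, if_neg hx, zero_mul, expect_const_zero]

lemma orbitCorr_injLift_of_not_injective_right (x : ι → X) (hy : ¬ Function.Injective y) :
    orbitCorr (Equiv.Perm X) (injLift F) x y = 0 := by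
  simp only [orbitCorr, injLift_smul, if_neg hy, mul_zero, expect_const_zero]

lemma orbitCorr_injLift_nonneg (hι : Fintype.card ι = ℓ)
    (hF : ∀ S, #S = ℓ → F S ∈ Set.Icc 0 1) (x y : ι → X) :
    0 ≤ orbitCorr (Equiv.Perm X) (injLift F) x y := by
  by_cases hx : Function.Injective x
  · by_cases hy : Function.Injective y
    · rw [orbitCorr_injLift hx hy]
      exact orbitCorr_nonneg hF (card_image_univ_eq hι hx) (card_image_univ_eq hι hy)
    · exact (orbitCorr_injLift_of_not_injective_right x hy).ge
  · exact (orbitCorr_injLift_of_not_injective_left hx y).ge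

lemma card_le_mul_of_card_lt {n ℓ k : ℕ} (hk : k ≤ ℓ) (hkn : ℓ + k ≤ n)
    (hn : n + 1 < ℓ + 2 * k) : n ≤ k * ℓ := by
  obtain ⟨k, rfl⟩ : ∃ m, k = m + 2 := ⟨k - 2, by omega⟩
  nlinarith

variable [DecidableEq ι]

lemma expect_injLift_sq (F : Finset X → ℝ) :
    𝔼 x : ι → X, injLift F x ^ 2 =
      𝔼 x : ι → X, orbitCorr (Equiv.Perm X) (injLift F) x x := by
  rw [← expect_expect_smul (G := Equiv.Perm X) fun _ _ _ => mem_univ _]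
  simp only [orbitCorr, sq]

lemma le_orbitCorr_injLift_piecewise (hι : Fintype.card ι = ℓ) (hk : k ≤ ℓ)
    (hX : ℓ + 2 * k ≤ Fintype.card X + 1) (hμ : johnsonCorr ℓ k F ≤ sliceAvg ℓ F)
    (hF : ∀ S, #S = ℓ → F S ∈ Set.Icc 0 1) {B : Finset ι} (hB : #B = k)
    (hx : Function.Injective x) (y : ι → X) :
    johnsonCorr ℓ k F
        - johnsonCorr ℓ k F * (if ¬ Function.Injective (B.piecewise y x) then 1 else 0)
        - (sliceAvg ℓ F - johnsonCorr ℓ k F) *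
          (if ¬ Disjoint (B.image y) (univ.image x) then 1 else 0) ≤
      orbitCorr (Equiv.Perm X) (injLift F) x (B.piecewise y x) := by
  have collision_nonneg : 0 ≤ (sliceAvg ℓ F - johnsonCorr ℓ k F) *
      (if ¬ Disjoint (B.image y) (univ.image x) then 1 else 0) :=
    mul_nonneg (sub_nonneg.mpr hμ) (by positivity)
  by_cases hz : Function.Injective (B.piecewise y x)
  case neg =>
    rw [if_pos hz, orbitCorr_injLift_of_not_injective_right x hz]
    linarith
  have hU := card_image_univ_eq hι hx
  have hV := card_image_univ_eq hι hz
  have hUV := card_sub_le_card_image_inter_image_piecewise B y hx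
  rw [if_neg (not_not.mpr hz), orbitCorr_injLift hx hz]
  rw [hι, hB] at hUV
  rcases hUV.eq_or_lt with hUV_eq | hUV_lt
  · rw [orbitCorr_eq_johnsonCorr (mem_johnsonEdges.mpr ⟨hU, hV, hUV_eq.symm⟩)]
    linarith
  · rw [if_pos (not_disjoint_image_of_card_sub_lt (by rwa [hι, hB]))]
    have hunion := card_union_add_card_inter (univ.image x) (univ.image (B.piecewise y x))
    have := two_mul_johnsonCorr_sub_le_orbitCorr hF hU hV hk hUV (by omega)
    linarith

lemma johnsonCorr_sub_le_expect_orbitCorr (hι : Fintype.card ι = ℓ) (hk : k ≤ ℓ)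
    (hX : ℓ + k ≤ Fintype.card X) (hF : ∀ S, #S = ℓ → F S ∈ Set.Icc 0 1) {B : Finset ι}
    (hB : #B = k) (hx : Function.Injective x) :
    johnsonCorr ℓ k F - k * ℓ / Fintype.card X * sliceAvg ℓ F ≤
      𝔼 y : ι → X, orbitCorr (Equiv.Perm X) (injLift F) x (B.piecewise y x) := by
  have : Nonempty (ι → X) := ⟨x⟩
  have hμ := johnsonCorr_le_sliceAvg (johnsonEdges_nonempty hk hX) hF
  have hb : 0 ≤ johnsonCorr ℓ k F := johnsonCorr_nonneg hF
  rcases le_or_gt (ℓ + 2 * k) (Fintype.card X + 1) with hroom | hroom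
  · have hinj := expect_boole_not_injective_piecewise_le B hx
    have hhit := expect_boole_not_disjoint_image_le B x
    rw [hB, hι] at hinj hhit
    refine le_trans ?_ (expect_le_expect fun y _ =>
      le_orbitCorr_injLift_piecewise hι hk hroom hμ hF hB hx y)
    rw [expect_sub_distrib, expect_sub_distrib, ← mul_expect, ← mul_expect, Fintype.expect_const]
    linarith [mul_le_mul_of_nonneg_left hinj hb,
      mul_le_mul_of_nonneg_left hhit (sub_nonneg.mpr hμ)]
  · have hX0 : (0 : ℝ) < Fintype.card X := by
      exact_mod_cast (show 0 < Fintype.card X by omega)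
    have hone : (1 : ℝ) ≤ k * ℓ / Fintype.card X := by
      rw [one_le_div hX0]
      exact_mod_cast card_le_mul_of_card_lt hk hX hroom
    have := le_mul_of_one_le_left (sliceAvg_nonneg hF) hone
    exact le_trans (by linarith) (expect_nonneg fun y _ => orbitCorr_injLift_nonneg hι hF x _)

lemma expect_injLift_mul_expect_piecewise (F : Finset X → ℝ) (B : Finset ι) :
    𝔼 x : ι → X, injLift F x * 𝔼 y : ι → X, injLift F (B.piecewise y x) =
      𝔼 x : ι → X, 𝔼 y : ι → X,
        orbitCorr (Equiv.Perm X) (injLift F) x (B.piecewise y x) := by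
  have piecewise_smul (σ : Equiv.Perm X) (x y : ι → X) :
      B.piecewise (σ • y) (σ • x) = σ • B.piecewise y x := by
    ext j
    by_cases hj : j ∈ B <;> simp [hj]
  simp only [mul_expect, ← expect_product', univ_product_univ]
  rw [← expect_expect_smul (G := Equiv.Perm X) (fun _ _ _ => mem_univ _)
    fun p : (ι → X) × (ι → X) => injLift F p.1 * injLift F (B.piecewise p.2 p.1)]
  simp only [orbitCorr, Prod.smul_fst, Prod.smul_snd, piecewise_smul]

lemma orbitCorr_injLift_sub_expect_le (hι : Fintype.card ι = ℓ) (hk : k ≤ ℓ)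
    (hX : ℓ + k ≤ Fintype.card X) (hF : ∀ S, #S = ℓ → F S ∈ Set.Icc 0 1) {B : Finset ι}
    (hB : #B = k) (x : ι → X) :
    orbitCorr (Equiv.Perm X) (injLift F) x x -
        𝔼 y : ι → X, orbitCorr (Equiv.Perm X) (injLift F) x (B.piecewise y x) ≤
      johnsonLaplacian ℓ k F + k * ℓ / Fintype.card X * sliceAvg ℓ F := by
  by_cases hx : Function.Injective x
  · rw [orbitCorr_injLift hx hx, orbitCorr_self_eq_sliceAvg (card_image_univ_eq hι hx),
      johnsonLaplacian_eq (johnsonEdges_nonempty hk hX)]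
    linarith [johnsonCorr_sub_le_expect_orbitCorr hι hk hX hF hB hx]
  · simp only [orbitCorr_injLift_of_not_injective_left hx, expect_const_zero, sub_zero]
    have := johnsonLaplacian_nonneg ℓ k F
    have := sliceAvg_nonneg hF
    positivity

end Lift

section Cube

/-- The Johnson-approximating operator on tuples: resample `k` uniformly chosen coordinates. -/
noncomputable def resampleOp {ι X : Type*} [Fintype ι] [DecidableEq ι] [Fintype X] (k : ℕ)
    (f : (ι → X) → ℝ) (x : ι → X) : ℝ :=
  𝔼 B ∈ powersetCard k univ, 𝔼 y : ι → X, f (B.piecewise y x)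

lemma expect_mul_resampleOp {ι X : Type*} [Fintype ι] [DecidableEq ι] [Fintype X] (k : ℕ)
    (f : (ι → X) → ℝ) :
    𝔼 x : ι → X, f x * resampleOp k f x =
      𝔼 B ∈ powersetCard k univ, 𝔼 x : ι → X, f x * 𝔼 y : ι → X, f (B.piecewise y x) := by
  simp only [resampleOp, mul_expect (powersetCard k univ)]
  exact expect_comm ..

theorem stmt15_general {ι X : Type*} [Fintype ι] [DecidableEq ι] [Fintype X] [DecidableEq X]
    {ℓ k : ℕ} (hι : Fintype.card ι = ℓ) (hk : k ≤ ℓ) (hX : ℓ + k ≤ Fintype.card X)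
    {F : Finset X → ℝ} (hF : ∀ S, #S = ℓ → F S ∈ Set.Icc 0 1) :
    𝔼 x : ι → X, injLift F x ^ 2 - 𝔼 x : ι → X, injLift F x * resampleOp k (injLift F) x ≤
      johnsonLaplacian ℓ k F + k * ℓ / Fintype.card X * sliceAvg ℓ F := by
  have hne : (powersetCard k (univ : Finset ι)).Nonempty :=
    powersetCard_nonempty.mpr (by rwa [card_univ, hι])
  have : Nonempty (ι → X) :=
    (Function.Embedding.nonempty_of_card_le (by omega)).map fun e : ι ↪ X => e
  rw [expect_mul_resampleOp, ← expect_const hne (𝔼 x : ι → X, injLift F x ^ 2),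
    ← expect_sub_distrib]
  refine expect_le hne fun B hB => ?_
  rw [expect_injLift_sq, expect_injLift_mul_expect_piecewise, ← expect_sub_distrib]
  exact expect_le univ_nonempty fun x _ =>
    orbitCorr_injLift_sub_expect_le hι hk hX hF (mem_powersetCard_univ.mp hB) x

end Cube

section ZMod

lemma mul_div_le_two_mul_sq_add_div (n : ℕ) {ℓ k : ℕ} (hk : k ≤ ℓ) :
    (k * ℓ / n : ℝ) ≤ (2 * ℓ ^ 2 + ℓ) / (2 * n) := by
  have hkℓ : (k : ℝ) * ℓ ≤ ℓ * ℓ := by gcongr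
  rw [← mul_div_mul_left (k * ℓ : ℝ) n two_ne_zero]
  gcongr
  linarith [(Nat.cast_nonneg ℓ : (0 : ℝ) ≤ ℓ)]

variable (n ℓ k : ℕ) [NeZero n]

lemma expect_eq_sum_div_pow (f : (Fin ℓ → ZMod n) → ℝ) :
    𝔼 x, f x = (∑ x, f x) / (n : ℝ) ^ ℓ := by
  simp [Fintype.expect_eq_sum_div_card]

lemma ugACop_eq_resampleOp (f : (Fin ℓ → ZMod n) → ℝ) : ugACop n ℓ k f = resampleOp k f := by
  ext x
  have translate (B : Finset (Fin ℓ)) :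
      ∑ y : Fin ℓ → ZMod n, f (fun j => x j + if j ∈ B then y j else 0) =
        ∑ y, f (B.piecewise y x) := by
    refine Fintype.sum_equiv (Equiv.addLeft x) _ _ fun y => congrArg f (funext fun j => ?_)
    by_cases hj : j ∈ B <;> simp [hj]
  simp only [ugACop, resampleOp, translate, univ_filter_card_eq, expect_eq_sum_div_card,
    card_powersetCard, card_univ, Fintype.card_fun, ZMod.card, Fintype.card_fin, Nat.cast_pow,
    ← sum_div]
  rw [div_div, mul_comm]

lemma ugJLap_eq_johnsonLaplacian (F : Finset (ZMod n) → ℝ) :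
    ugJLap n ℓ k F = johnsonLaplacian ℓ k F := by
  rw [johnsonLaplacian, expect_eq_sum_div_card]
  rfl

lemma ugJAvg_eq_sliceAvg (F : Finset (ZMod n) → ℝ) : ugJAvg n ℓ F = sliceAvg ℓ F := by
  rw [ugJAvg, sliceAvg, expect_eq_sum_div_card, univ_filter_card_eq, card_powersetCard, card_univ,
    ZMod.card]

end ZMod

/-- comparison of Laplacian quadratic forms between the Johnson graph and
the Johnson-approximating graph, via the lift `G` of `F` to the cube. -/
theorem stmt15 (n ℓ k : ℕ) [NeZero n] (hℓ : 1 ≤ ℓ) (hn : 2 * ℓ ≤ n) (hk1 : 1 ≤ k)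
    (α : ℝ) (hα0 : 0 < α) (hα1 : α < 1) (hk : (k : ℝ) = α * ℓ)
    (F : Finset (ZMod n) → ℝ)
    (hF : ∀ S : Finset (ZMod n), S.card = ℓ → 0 ≤ F S ∧ F S ≤ 1)
    (G : (Fin ℓ → ZMod n) → ℝ)
    (hG : ∀ x : Fin ℓ → ZMod n,
      G x = if Function.Injective x then F (Finset.image x univ) else 0) :
    (∑ x : Fin ℓ → ZMod n, G x ^ 2) / (n : ℝ) ^ ℓ
        - (∑ x : Fin ℓ → ZMod n, G x * ugACop n ℓ k G x) / (n : ℝ) ^ ℓ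
      ≤ ugJLap n ℓ k F + ((2 * (ℓ : ℝ) ^ 2 + ℓ) / (2 * n)) * ugJAvg n ℓ F := by
  obtain rfl : G = injLift F := funext hG
  have hkℓ : k ≤ ℓ := by
    exact_mod_cast hk.trans_le (mul_le_of_le_one_left (Nat.cast_nonneg ℓ) hα1.le)
  have general := stmt15_general (Fintype.card_fin ℓ) hkℓ (by rw [ZMod.card]; omega) hF
  rw [ZMod.card] at general
  simp only [← expect_eq_sum_div_pow, ugACop_eq_resampleOp, ugJLap_eq_johnsonLaplacian,
    ugJAvg_eq_sliceAvg]
  exact general.trans <| add_le_add le_rfl <|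
    mul_le_mul_of_nonneg_right (mul_div_le_two_mul_sq_add_div n hkℓ) (sliceAvg_nonneg hF)
end

section
/- Let α ∈ (0,1) with αℓ ∈ ℕ, and let ℓ ≥ 1 and n ≥ 2ℓ be integers. Given F : V(J_{n,ℓ,α}) → [0,1], define G : [n]^ℓ → [0,1] by G(x₁,…,x_ℓ) = F({x₁,…,x_ℓ}) if the coordinates are pairwise distinct, and G(x) = 0 otherwise. Then for every integer j with 0 ≤ j ≤ ℓ−1: E_{Y ∈ [n]^j}[δ_Y(G)²] ≤ E_{Y'}[δ_{Y'}(F)²], where the left expectation is over a uniformly random tuple Y ∈ [n]^j with δ_Y(G) = E_{x ∈ [n]^{ℓ−j}}[G(Y,x)], and the right expectation is over a uniformly random j-element subset Y' of {1,…,n} with δ_{Y'}(F) equal to the average of F(S) over ℓ-element subsets S ⊇ Y'. -/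
open Finset

/-- Concatenation of a prefix tuple of length `r` with a suffix tuple of length `ℓ − r`. -/
def ugConcat {α : Type*} (ℓ r : ℕ) (A : Fin r → α) (x : Fin (ℓ - r) → α) : Fin ℓ → α :=
  fun j => if hj : (j : ℕ) < r then A ⟨(j : ℕ), hj⟩
    else x ⟨(j : ℕ) - r, by have h := j.isLt; omega⟩

/-- The restricted density on the cube: `δ_Y(G) = E_{x ∈ [n]^{ℓ−j}}[G(Y, x)]`. -/
noncomputable def ugDelta (n ℓ r : ℕ) [NeZero n] (G : (Fin ℓ → ZMod n) → ℝ)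
    (A : Fin r → ZMod n) : ℝ :=
  (∑ x : Fin (ℓ - r) → ZMod n, G (ugConcat ℓ r A x)) / (n : ℝ) ^ (ℓ - r)

/-- The restricted density on the Johnson graph: the average of `F(S)` over ℓ-element
sets `S ⊇ Y'`. -/
noncomputable def ugJDelta (n ℓ : ℕ) [NeZero n] (F : Finset (ZMod n) → ℝ)
    (Y : Finset (ZMod n)) : ℝ :=
  (∑ S ∈ univ.filter (fun S : Finset (ZMod n) => S.card = ℓ ∧ Y ⊆ S), F S)
    / (Nat.choose (n - Y.card) (ℓ - Y.card) : ℝ)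

/-!
Every set with `m` elements is the set of entries of exactly `m!` tuples, so the sum of a lift over
all tuples of length `m` is `m!` times a sum over `m`-element sets. Applied to the free coordinates
after a prefix `Y`, this shows that the cube density `δ_Y` of the lift of `F` is itself the lift of
`Y' ↦ δ_{Y'}(F)`, scaled by the probability that `ℓ - j` random coordinates are pairwise distinct
and avoid `Y'`. Applied to the prefix, it relates the two mean squares by an exact identity, whose
factors are probabilities, hence at most `1`.
-/

/-- The lift `G` of a function `F` on finite sets to tuples: `G x` is `F {x i | i}` if the entries
of `x` are pairwise distinct, and `0` otherwise. The index type is arbitrary, so that a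
concatenation of tuples can be treated as a tuple indexed by a sum type. -/
def cubeLift {ι α M : Type*} [Fintype ι] [DecidableEq ι] [DecidableEq α] [Zero M]
    (F : Finset α → M) (x : ι → α) : M :=
  if Function.Injective x then F (image x univ) else 0

lemma injective_iff_card_image_univ {ι α : Type*} [Fintype ι] [DecidableEq α] {x : ι → α} :
    Function.Injective x ↔ #(image x univ) = Fintype.card ι := by
  rw [← card_univ, card_image_iff, coe_univ, Set.injOn_univ]

section CubeLift

variable {ι κ α M : Type*} [Fintype ι] [DecidableEq ι] [Fintype κ] [DecidableEq κ] [DecidableEq α]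

lemma cubeLift_of_injective [Zero M] (F : Finset α → M) {x : ι → α} (hx : Function.Injective x) :
    cubeLift F x = F (image x univ) :=
  if_pos hx

lemma cubeLift_of_not_injective [Zero M] (F : Finset α → M) {x : ι → α}
    (hx : ¬ Function.Injective x) : cubeLift F x = 0 :=
  if_neg hx

lemma cubeLift_comp_equiv [Zero M] (F : Finset α → M) (x : ι → α) (e : κ ≃ ι) :
    cubeLift F (x ∘ e) = cubeLift F x := by
  simp only [cubeLift, e.injective_comp, ← image_image, image_univ_equiv]

lemma cubeLift_pow [MonoidWithZero M] (F : Finset α → M) (x : ι → α) {p : ℕ} (hp : p ≠ 0) :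
    cubeLift F x ^ p = cubeLift (fun S ↦ F S ^ p) x := by
  simp only [cubeLift, ite_pow, zero_pow hp]

lemma cubeLift_sumElim [Zero M] (F : Finset α → M) (y : ι → α) (x : κ → α) :
    cubeLift F (Sum.elim y x) =
      cubeLift (fun A ↦ cubeLift (fun T ↦ if Disjoint A T then F (A ∪ T) else 0) x) y := by
  have himage : image (Sum.elim y x) univ = image y univ ∪ image x univ := by
    ext a; simp
  have hdisj : (∀ i k, y i ≠ x k) ↔ Disjoint (image y univ) (image x univ) := by
    simp [disjoint_left, eq_comm]
  simp only [cubeLift, Sum.elim_injective, himage, hdisj, ite_and]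

lemma card_filter_image_univ_eq [Fintype α] {T : Finset α} (hT : #T = Fintype.card ι) :
    #{x : ι → α | image x univ = T} = (Fintype.card ι).factorial := by
  have hcard : Fintype.card ι = Fintype.card T := by rw [Fintype.card_coe, hT]
  rw [← Fintype.card_equiv (Fintype.equivOfCardEq hcard), ← card_univ]
  symm
  refine card_bij (fun (e : ι ≃ T) _ i ↦ (e i : α)) (fun e _ ↦ ?_) (fun e _ e' _ h ↦ ?_)
    (fun x hx ↦ ?_)
  · refine mem_filter.2 ⟨mem_univ _, ?_⟩
    ext a
    simp [e.exists_congr_left]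
  · exact Equiv.ext fun i ↦ Subtype.ext (congrFun h i)
  · obtain rfl : image x univ = T := (mem_filter.1 hx).2
    have hsurj : Function.Surjective
        fun i ↦ (⟨x i, mem_image_of_mem x (mem_univ i)⟩ : image x univ) := by
      rintro ⟨a, ha⟩
      simpa using ha
    exact ⟨.ofBijective _ ((Fintype.bijective_iff_surjective_and_card _).2 ⟨hsurj, hcard⟩),
      mem_univ _, rfl⟩

lemma sum_cubeLift [Fintype α] [AddCommMonoid M] (F : Finset α → M) :
    ∑ x : ι → α, cubeLift F x =
      (Fintype.card ι).factorial • ∑ S : Finset α with #S = Fintype.card ι, F S := by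
  simp only [cubeLift, injective_iff_card_image_univ]
  rw [← Fintype.sum_fiberwise' (fun x : ι → α ↦ image x univ)
    (fun S ↦ if #S = Fintype.card ι then F S else 0), smul_sum, sum_filter]
  refine sum_congr rfl fun S _ ↦ ?_
  split_ifs with hS
  · simp [← card_filter_image_univ_eq hS, Fintype.card_subtype]
  · simp

lemma sum_ite_disjoint_union [Fintype α] [AddCommMonoid M] (F : Finset α → M) (A : Finset α)
    (m : ℕ) :
    ∑ T : Finset α with #T = m, (if Disjoint A T then F (A ∪ T) else 0) =
      ∑ S : Finset α with #S = #A + m ∧ A ⊆ S, F S := by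
  rw [← sum_filter, filter_filter]
  refine sum_nbij' (A ∪ ·) (· \ A) ?_ ?_ ?_ ?_ fun _ _ ↦ rfl
  · simp +contextual [card_union_of_disjoint]
  · simp +contextual [card_sdiff_of_subset, disjoint_sdiff]
  · simp +contextual [union_sdiff_cancel_left]
  · simp +contextual

lemma sum_cubeLift_sumElim [Fintype α] [AddCommMonoid M] (F : Finset α → M) (y : ι → α) :
    ∑ x : κ → α, cubeLift F (Sum.elim y x) =
      cubeLift (fun A ↦ (Fintype.card κ).factorial •
        ∑ S : Finset α with #S = #A + Fintype.card κ ∧ A ⊆ S, F S) y := by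
  simp only [cubeLift_sumElim]
  by_cases hy : Function.Injective y
  · simp only [cubeLift_of_injective _ hy, sum_cubeLift, sum_ite_disjoint_union]
  · simp only [cubeLift_of_not_injective _ hy, sum_const_zero]

end CubeLift

lemma ugConcat_eq_sumElim_comp {α : Type*} {ℓ r : ℕ} (hr : r ≤ ℓ) (A : Fin r → α)
    (x : Fin (ℓ - r) → α) :
    ugConcat ℓ r A x = Sum.elim A x ∘
      (finSumFinEquiv.trans (finCongr (Nat.add_sub_of_le hr))).symm := by
  rw [Equiv.eq_comp_symm]
  ext (i | i) <;> simp [ugConcat]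

lemma factorial_mul_div_pow {K : Type*} [Field K] [CharZero K] {N m : ℕ} (hm : m ≤ N) (s d : K) :
    m.factorial * s / d ^ m = N.descFactorial m / d ^ m * (s / N.choose m) := by
  have hchoose : (N.choose m : K) ≠ 0 := mod_cast (Nat.choose_pos hm).ne'
  rw [Nat.descFactorial_eq_factorial_mul_choose]
  push_cast
  field_simp

lemma descFactorial_div_pow_le_one {N n : ℕ} (hN : N ≤ n) (m : ℕ) :
    (N.descFactorial m : ℝ) / (n : ℝ) ^ m ≤ 1 :=
  div_le_one_of_le₀
    (mod_cast (Nat.descFactorial_le_pow N m).trans (Nat.pow_le_pow_left hN m)) (by positivity)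

section RestrictedDensity

variable {n ℓ j : ℕ} [NeZero n]

lemma ugDelta_cubeLift (hℓ : ℓ ≤ n) (hj : j ≤ ℓ) (F : Finset (ZMod n) → ℝ) (Y : Fin j → ZMod n) :
    ugDelta n ℓ j (cubeLift F) Y =
      cubeLift (fun Y' ↦ (n - j).descFactorial (ℓ - j) / (n : ℝ) ^ (ℓ - j) * ugJDelta n ℓ F Y')
        Y := by
  simp only [ugDelta, ugConcat_eq_sumElim_comp hj, cubeLift_comp_equiv, sum_cubeLift_sumElim,
    Fintype.card_fin, nsmul_eq_mul]
  by_cases hY : Function.Injective Y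
  · have hcard : #(image Y univ) = j := by
      rw [injective_iff_card_image_univ.1 hY, Fintype.card_fin]
    simp only [cubeLift_of_injective _ hY, ugJDelta, hcard, Nat.add_sub_of_le hj,
      factorial_mul_div_pow (Nat.sub_le_sub_right hℓ j)]
  · simp only [cubeLift_of_not_injective _ hY, zero_div]

lemma mean_ugDelta_cubeLift_pow (hℓ : ℓ ≤ n) (hj : j ≤ ℓ) (F : Finset (ZMod n) → ℝ) {p : ℕ}
    (hp : p ≠ 0) :
    (∑ Y : Fin j → ZMod n, ugDelta n ℓ j (cubeLift F) Y ^ p) / (n : ℝ) ^ j =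
      n.descFactorial j / (n : ℝ) ^ j *
        ((n - j).descFactorial (ℓ - j) / (n : ℝ) ^ (ℓ - j)) ^ p *
        ((∑ Y' : Finset (ZMod n) with #Y' = j, ugJDelta n ℓ F Y' ^ p) / n.choose j) := by
  simp only [ugDelta_cubeLift hℓ hj, cubeLift_pow _ _ hp, sum_cubeLift, Fintype.card_fin,
    nsmul_eq_mul, factorial_mul_div_pow (hj.trans hℓ), mul_pow, ← mul_sum]
  ring

theorem stmt16_general (hℓ : ℓ ≤ n) (hj : j ≤ ℓ) (F : Finset (ZMod n) → ℝ) :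
    (∑ Y : Fin j → ZMod n, ugDelta n ℓ j (cubeLift F) Y ^ 2) / (n : ℝ) ^ j ≤
      (∑ Y' : Finset (ZMod n) with #Y' = j, ugJDelta n ℓ F Y' ^ 2) / n.choose j := by
  rw [mean_ugDelta_cubeLift_pow hℓ hj F two_ne_zero]
  have hprefix := descFactorial_div_pow_le_one le_rfl (N := n) j
  have hsuffix := descFactorial_div_pow_le_one (Nat.sub_le n j) (ℓ - j)
  refine mul_le_of_le_one_left (by positivity) (mul_le_one₀ hprefix (by positivity) ?_)
  exact pow_le_one₀ (by positivity) hsuffix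

end RestrictedDensity

/-- the mean-square restricted densities of the cube lift `G` of `F` are
dominated by those of `F` on the Johnson graph. -/
theorem stmt16 (n ℓ k : ℕ) [NeZero n] (hℓ : 1 ≤ ℓ) (hn : 2 * ℓ ≤ n) (hk1 : 1 ≤ k)
    (α : ℝ) (hα0 : 0 < α) (hα1 : α < 1) (hk : (k : ℝ) = α * ℓ)
    (F : Finset (ZMod n) → ℝ)
    (hF : ∀ S : Finset (ZMod n), S.card = ℓ → 0 ≤ F S ∧ F S ≤ 1)
    (G : (Fin ℓ → ZMod n) → ℝ)
    (hG : ∀ x : Fin ℓ → ZMod n,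
      G x = if Function.Injective x then F (Finset.image x univ) else 0)
    (j : ℕ) (hj : j < ℓ) :
    (∑ Y : Fin j → ZMod n, (ugDelta n ℓ j G Y) ^ 2) / (n : ℝ) ^ j
      ≤ (∑ Y' ∈ univ.filter (fun Y' : Finset (ZMod n) => Y'.card = j),
            (ugJDelta n ℓ F Y') ^ 2) / (Nat.choose n j : ℝ) := by
  obtain rfl : G = cubeLift F := funext hG
  exact stmt16_general (by omega) hj.le F
end
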